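/- Let f : ℝ^m → ℝ and g : ℝ^n → ℝ be differentiable, A ∈ ℝ^{m×n}, η > 0, and let z_k = (x_k, y_k) evolve following the alternating method x_{k+1} = x_k − η A ∇g(y_k), y_{k+1} = y_k + η Aᵀ ∇f(x_{k+1}). Define p_k = ∇f(x_k), q_k = ∇g(y_k), and for arbitrary z = (x, y) ∈ ℝ^{m+n} set p = ∇f(x), q = ∇g(y). Then the cumulative regret R_K(p, q) = R_{1,K}(p) + R_{2,K}(q) satisfies the exact identity R_K(p, q) = (1/η)(D_H(z₀, z) − D_H(z_K, z) + H_η(z_K) − H_η(z₀)), where H(x,y) = f(x) + g(y), D_H is its Bregman divergence, and H_η(x,y) = H(x,y) − (η/2)⟨∇f(x), A ∇g(y)⟩. -/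

import Mathlib

open RealInnerProductSpace Matrix

/-- The Bregman divergence `D_f(x', x) = f(x') − f(x) − ⟨∇f(x), x' − x⟩`. -/
noncomputable def bregman {m : ℕ} (f : EuclideanSpace ℝ (Fin m) → ℝ)
    (x' x : EuclideanSpace ℝ (Fin m)) : ℝ :=
  f x' - f x - ⟪gradient f x, x' - x⟫

/-- The modified energy `H_η(x, y) = f(x) + g(y) − (η/2)⟨∇f(x), A ∇g(y)⟩`. -/
noncomputable def modifiedEnergy {m n : ℕ} (f : EuclideanSpace ℝ (Fin m) → ℝ)
    (g : EuclideanSpace ℝ (Fin n) → ℝ) (A : Matrix (Fin m) (Fin n) ℝ) (η : ℝ)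
    (x : EuclideanSpace ℝ (Fin m)) (y : EuclideanSpace ℝ (Fin n)) : ℝ :=
  f x + g y - η / 2 * ⟪gradient f x, Matrix.toEuclideanLin A (gradient g y)⟫

/-- Regret of the first player after `K` iterations, with `p_k = ∇f(x_k)`, `q_k = ∇g(y_k)`. -/
noncomputable def regret1 {m n : ℕ} (f : EuclideanSpace ℝ (Fin m) → ℝ)
    (g : EuclideanSpace ℝ (Fin n) → ℝ) (A : Matrix (Fin m) (Fin n) ℝ)
    (x : ℕ → EuclideanSpace ℝ (Fin m)) (y : ℕ → EuclideanSpace ℝ (Fin n)) (K : ℕ)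
    (p : EuclideanSpace ℝ (Fin m)) : ℝ :=
  ∑ k ∈ Finset.range K, ⟪(2:ℝ)⁻¹ • (gradient f (x k) + gradient f (x (k+1))),
      Matrix.toEuclideanLin A (gradient g (y k))⟫ -
    ∑ k ∈ Finset.range K, ⟪p, Matrix.toEuclideanLin A (gradient g (y k))⟫

/-- Regret of the second player after `K` iterations, with `p_k = ∇f(x_k)`, `q_k = ∇g(y_k)`. -/
noncomputable def regret2 {m n : ℕ} (f : EuclideanSpace ℝ (Fin m) → ℝ)
    (g : EuclideanSpace ℝ (Fin n) → ℝ) (A : Matrix (Fin m) (Fin n) ℝ)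
    (x : ℕ → EuclideanSpace ℝ (Fin m)) (y : ℕ → EuclideanSpace ℝ (Fin n)) (K : ℕ)
    (q : EuclideanSpace ℝ (Fin n)) : ℝ :=
  ∑ k ∈ Finset.range K, ⟪gradient f (x (k+1)), Matrix.toEuclideanLin A q⟫ -
    ∑ k ∈ Finset.range K, ⟪gradient f (x (k+1)),
      Matrix.toEuclideanLin A ((2:ℝ)⁻¹ • (gradient g (y k) + gradient g (y (k+1))))⟫

/-- **Cumulative regret of alternating mirror descent in terms of the modified energy.**
Along the alternating method `x_{k+1} = x_k − η A ∇g(y_k)`, `y_{k+1} = y_k + η Aᵀ ∇f(x_{k+1})`,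
for any reference dual point `z = (x̂, ŷ)` with `p = ∇f(x̂)`, `q = ∇g(ŷ)`:
`R_K(p, q) = (1/η)(D_H(z₀, z) − D_H(z_K, z) + H_η(z_K) − H_η(z₀))`. -/
theorem regret_eq_modifiedEnergy_diff {m n : ℕ}
    (f : EuclideanSpace ℝ (Fin m) → ℝ) (g : EuclideanSpace ℝ (Fin n) → ℝ)
    (hf : Differentiable ℝ f) (hg : Differentiable ℝ g)
    (A : Matrix (Fin m) (Fin n) ℝ) (η : ℝ) (hη : 0 < η)
    (x : ℕ → EuclideanSpace ℝ (Fin m)) (y : ℕ → EuclideanSpace ℝ (Fin n))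
    (hx : ∀ k, x (k+1) = x k - η • Matrix.toEuclideanLin A (gradient g (y k)))
    (hy : ∀ k, y (k+1) = y k + η • Matrix.toEuclideanLin Aᵀ (gradient f (x (k+1))))
    (xh : EuclideanSpace ℝ (Fin m)) (yh : EuclideanSpace ℝ (Fin n)) (K : ℕ) :
    regret1 f g A x y K (gradient f xh) + regret2 f g A x y K (gradient g yh) =
      (1 / η) * ((bregman f (x 0) xh + bregman g (y 0) yh) -
        (bregman f (x K) xh + bregman g (y K) yh) +
        (modifiedEnergy f g A η (x K) (y K) - modifiedEnergy f g A η (x 0) (y 0))) := by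
  have hadj : ∀ (p : EuclideanSpace ℝ (Fin m)) (q : EuclideanSpace ℝ (Fin n)),
      ⟪q, Matrix.toEuclideanLin Aᵀ p⟫ = ⟪p, Matrix.toEuclideanLin A q⟫ := by
    intro p q
    have h1 : Matrix.toEuclideanLin Aᵀ = LinearMap.adjoint (Matrix.toEuclideanLin A) := by
      rw [← Matrix.toEuclideanLin_conjTranspose_eq_adjoint, Matrix.conjTranspose_eq_transpose_of_trivial]
    rw [h1, LinearMap.adjoint_inner_right, real_inner_comm]
  have hη0 : η ≠ 0 := hη.ne'
  induction K with
  | zero => simp [regret1, regret2]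
  | succ K ih =>
    have e1 : ⟪gradient f xh, x (K+1) - xh⟫ = ⟪gradient f xh, x K - xh⟫
        - η * ⟪gradient f xh, Matrix.toEuclideanLin A (gradient g (y K))⟫ := by
      rw [hx K]; simp only [inner_sub_right, inner_smul_right]; ring
    have e2 : ⟪gradient g yh, y (K+1) - yh⟫ = ⟪gradient g yh, y K - yh⟫
        + η * ⟪gradient f (x (K+1)), Matrix.toEuclideanLin A (gradient g yh)⟫ := by
      rw [hy K, ← hadj]; simp only [inner_sub_right, inner_add_right, inner_smul_right]; ring
    simp only [regret1, regret2, bregman, modifiedEnergy, Finset.sum_range_succ] at ih ⊢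
    rw [e1, e2]
    have e3 : ⟪(2:ℝ)⁻¹ • (gradient f (x K) + gradient f (x (K+1))),
        Matrix.toEuclideanLin A (gradient g (y K))⟫ =
        (⟪gradient f (x K), Matrix.toEuclideanLin A (gradient g (y K))⟫
        + ⟪gradient f (x (K+1)), Matrix.toEuclideanLin A (gradient g (y K))⟫) / 2 := by
      rw [real_inner_smul_left, inner_add_left]; ring
    have e4 : ⟪gradient f (x (K+1)),
        Matrix.toEuclideanLin A ((2:ℝ)⁻¹ • (gradient g (y K) + gradient g (y (K+1))))⟫ =
        (⟪gradient f (x (K+1)), Matrix.toEuclideanLin A (gradient g (y K))⟫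
        + ⟪gradient f (x (K+1)), Matrix.toEuclideanLin A (gradient g (y (K+1)))⟫) / 2 := by
      rw [map_smul, map_add, real_inner_smul_right, inner_add_right]; ring
    rw [e3, e4]
    rw [one_div, eq_inv_mul_iff_mul_eq₀ hη0] at ih ⊢
    linear_combination ih
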